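/- Let V be a finite set of n vertices and let μ be a loopless multigraph on V, given by a symmetric multiplicity function assigning to each unordered pair of distinct vertices of V a natural number, such that the underlying simple graph G_μ (in which u and v are adjacent if and only if μ({u,v}) ≥ 1) of μ is connected. Suppose that the deletion of the edges of any cycle of μ disconnects μ, that is: (a) for every pair {u,v} of distinct vertices with μ({u,v}) ≥ 2, the underlying simple graph of the multigraph obtained from μ by decreasing μ({u,v}) by 2 is disconnected; and (b) for every cycle C of G_μ, the underlying simple graph of the multigraph obtained from μ by decreasing the multiplicity of every edge of C by 1 is disconnected. Then the total number of edges of μ, namely Σ_{unordered pairs {u,v}} μ({u,v}), is at most 2n − 2. -/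

import Mathlib

/-!
Fix a spanning tree `T` of the underlying graph and remove one copy of each edge of `T` from `μ`.
Deleting from `μ` any edges that survive in the remainder leaves `T` intact, hence leaves the graph
connected, so the remainder contains no cycle: it has no parallel edges and its underlying graph is
a forest. Both `T` and the forest have at most `n - 1` edges.
-/

/-- The underlying simple graph of a loopless multigraph given by a
multiplicity function `μ` on unordered pairs: `u` and `v` are adjacent
if and only if `μ s(u,v) ≥ 1`. -/
def underlyingGraph {V : Type*} (μ : Sym2 V → ℕ) : SimpleGraph V :=
  SimpleGraph.fromRel (fun u v => 1 ≤ μ s(u, v))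

section Multigraph

variable {V : Type*}

theorem underlyingGraph_adj {μ : Sym2 V → ℕ} {u v : V} :
    (underlyingGraph μ).Adj u v ↔ u ≠ v ∧ 1 ≤ μ s(u, v) := by
  simp only [underlyingGraph, SimpleGraph.fromRel_adj, Sym2.eq_swap (a := v), or_self]

/-- A simple graph regarded as a multigraph: edges have multiplicity `1`, all other pairs
multiplicity `0`. It is used to remove one copy of every edge of a graph from a multigraph, as the
pointwise difference `μ - edgeMultiplicity G`. -/
noncomputable def edgeMultiplicity (G : SimpleGraph V) : Sym2 V → ℕ :=
  G.edgeSet.indicator 1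

theorem edgeMultiplicity_apply_of_mem {G : SimpleGraph V} {e : Sym2 V} (he : e ∈ G.edgeSet) :
    edgeMultiplicity G e = 1 :=
  Set.indicator_of_mem he 1

theorem gc_edgeMultiplicity_underlyingGraph :
    GaloisConnection (edgeMultiplicity (V := V)) underlyingGraph := by
  intro G μ
  constructor
  · intro h u v huv
    exact underlyingGraph_adj.2 ⟨huv.ne, (edgeMultiplicity_apply_of_mem huv).symm.trans_le (h _)⟩
  · intro h
    refine Set.indicator_le' (fun e he ↦ ?_) (fun _ _ ↦ Nat.zero_le _)
    induction e with
    | h u v => exact (underlyingGraph_adj.1 (h he)).2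

theorem le_edgeMultiplicity_underlyingGraph {μ : Sym2 V → ℕ} (hloopless : ∀ v, μ s(v, v) = 0)
    (hsimple : ∀ u v, u ≠ v → μ s(u, v) ≤ 1) : μ ≤ edgeMultiplicity (underlyingGraph μ) := by
  intro e
  induction e with
  | h u v =>
    obtain rfl | huv := eq_or_ne u v
    · exact (hloopless u).trans_le (Nat.zero_le _)
    obtain h0 | hpos := (μ s(u, v)).eq_zero_or_pos
    · exact h0.trans_le (Nat.zero_le _)
    · exact (hsimple u v huv).trans_eq
        (edgeMultiplicity_apply_of_mem (underlyingGraph_adj.2 ⟨huv, hpos⟩)).symm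

section Deletion

variable {μ D : Sym2 V → ℕ} {H : SimpleGraph V}

theorem le_underlyingGraph_sub (hHμ : H ≤ underlyingGraph μ) (hD : D ≤ μ - edgeMultiplicity H) :
    H ≤ underlyingGraph (μ - D) := by
  rw [← gc_edgeMultiplicity_underlyingGraph.le_iff_le] at hHμ ⊢
  exact le_tsub_of_add_le_left (add_le_of_le_tsub_right_of_le hHμ hD)

variable [DecidableEq (Sym2 V)]

theorem sub_edgeMultiplicity_apply_le_one (hH : H.Connected) (hHμ : H ≤ underlyingGraph μ)
    {e : Sym2 V}
    (hpair : 2 ≤ μ e → ¬ (underlyingGraph (Function.update μ e (μ e - 2))).Connected) :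
    (μ - edgeMultiplicity H) e ≤ 1 := by
  by_contra! htwo
  have hdelete : Function.update μ e (μ e - 2) = μ - Pi.single e 2 := by
    ext f
    obtain rfl | hf := eq_or_ne f e
    · simp
    · simp [hf]
  refine hpair (htwo.trans_le (Nat.sub_le _ _)) ?_
  rw [hdelete]
  exact hH.mono (le_underlyingGraph_sub hHμ
    (update_le_iff.2 ⟨htwo, fun _ _ ↦ Nat.zero_le _⟩))

theorem isAcyclic_underlyingGraph_sub_edgeMultiplicity (hH : H.Connected)
    (hHμ : H ≤ underlyingGraph μ)
    (hcycle : ∀ (x : V) (C : (underlyingGraph μ).Walk x x), C.IsCycle →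
      ¬ (underlyingGraph (fun e => if e ∈ C.edges then μ e - 1 else μ e)).Connected) :
    (underlyingGraph (μ - edgeMultiplicity H)).IsAcyclic := by
  intro x C hC
  have hle : underlyingGraph (μ - edgeMultiplicity H) ≤ underlyingGraph μ :=
    gc_edgeMultiplicity_underlyingGraph.monotone_u tsub_le_self
  have hdelete : (fun e ↦ if e ∈ (C.mapLe hle).edges then μ e - 1 else μ e) =
      μ - C.edgeSet.indicator 1 := by
    ext e
    by_cases he : e ∈ C.edges <;> simp [he]
  have hCH : C.edgeSet.indicator 1 ≤ μ - edgeMultiplicity H :=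
    calc C.edgeSet.indicator 1
      _ ≤ edgeMultiplicity (underlyingGraph (μ - edgeMultiplicity H)) :=
        Set.indicator_le_indicator_of_subset (fun _ he ↦ C.edges_subset_edgeSet he)
          (fun _ ↦ Nat.zero_le _)
      _ ≤ μ - edgeMultiplicity H := gc_edgeMultiplicity_underlyingGraph.l_u_le _
  refine hcycle x (C.mapLe hle) (hC.mapLe hle) ?_
  rw [hdelete]
  exact hH.mono (le_underlyingGraph_sub hHμ hCH)

end Deletion

section EdgeCount

variable {G : SimpleGraph V} [Fintype G.edgeSet]

theorem card_edgeFinset_add_one_le_of_isAcyclic [Fintype V] [Nonempty V] (hG : G.IsAcyclic) :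
    G.edgeFinset.card + 1 ≤ Fintype.card V := by
  classical
  obtain ⟨T, hGT, -, hT⟩ :=
    SimpleGraph.connected_top.exists_isTree_le_of_le_of_isAcyclic (le_top : G ≤ ⊤) hG
  rw [← hT.card_edgeFinset]
  gcongr

theorem sum_edgeMultiplicity [Fintype (Sym2 V)] :
    ∑ e, edgeMultiplicity G e = G.edgeFinset.card := by
  rw [edgeMultiplicity, ← SimpleGraph.coe_edgeFinset,
    Finset.sum_indicator_subset _ G.edgeFinset.subset_univ]
  exact (Finset.card_eq_sum_ones _).symm

end EdgeCount

end Multigraph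

/-- Let `μ` be a loopless multigraph on a finite vertex set
`V` of `n` vertices whose underlying simple graph is connected, such that the
deletion of the edges of any cycle of `μ` disconnects it: (a) removing two
parallel edges between any pair of vertices disconnects the underlying graph,
and (b) removing one copy of each edge of any cycle of the underlying graph
disconnects the underlying graph. Then `μ` has at most `2n - 2` edges. -/
theorem statement10 {V : Type*} [Fintype V] [DecidableEq V]
    (μ : Sym2 V → ℕ)
    (hloopless : ∀ v : V, μ s(v, v) = 0)
    (hconn : (underlyingGraph μ).Connected)
    (ha : ∀ u v : V, u ≠ v → 2 ≤ μ s(u, v) →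
      ¬ (underlyingGraph (Function.update μ s(u, v) (μ s(u, v) - 2))).Connected)
    (hb : ∀ (x : V) (C : (underlyingGraph μ).Walk x x), C.IsCycle →
      ¬ (underlyingGraph
          (fun e => if e ∈ C.edges then μ e - 1 else μ e)).Connected) :
    ∑ e : Sym2 V, μ e ≤ 2 * Fintype.card V - 2 := by
  classical
  have := hconn.nonempty
  obtain ⟨T, hTμ, hT⟩ := hconn.exists_isTree_le
  set ν := μ - edgeMultiplicity T
  have hν : ν ≤ edgeMultiplicity (underlyingGraph ν) :=
    le_edgeMultiplicity_underlyingGraph (fun v ↦ by simp [ν, hloopless])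
      (fun u v huv ↦ sub_edgeMultiplicity_apply_le_one hT.connected hTμ (ha u v huv))
  have hforest : (underlyingGraph ν).IsAcyclic :=
    isAcyclic_underlyingGraph_sub_edgeMultiplicity hT.connected hTμ hb
  have hTcard := hT.card_edgeFinset
  have hforest_card := card_edgeFinset_add_one_le_of_isAcyclic hforest
  calc ∑ e, μ e
    _ ≤ ∑ e, (edgeMultiplicity T e + edgeMultiplicity (underlyingGraph ν) e) :=
      Finset.sum_le_sum fun e _ ↦ tsub_le_iff_left.1 (hν e)
    _ = T.edgeFinset.card + (underlyingGraph ν).edgeFinset.card := by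
      rw [Finset.sum_add_distrib, sum_edgeMultiplicity, sum_edgeMultiplicity]
    _ ≤ 2 * Fintype.card V - 2 := by omega
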